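/- Let ε ∈ {0, 1/2} and j ∈ ℂ (with j − ε ∉ ℤ when 2j ∈ ℤ), and consider the coupling F_{1/2} ⊗ C^ε_j. For every M ∈ ε + 1/2 + ℤ, the 2×2 restriction Q_M of the Casimir 𝒬 to V_M is diagonalizable if and only if j ≠ −1/2, and in that case its eigenvalues are the two distinct values q_(−1/2) = −(j−1/2)(j+1/2) and q_(1/2) = −(j+1/2)(j+3/2). -/

import Mathlib

/-!
Why the theorem holds. Put `m = ε + M₀`, so `M = m + 1/2`, and `C = C₊(j,m) = C₋(j,m+1)`. In the
basis `|1/2,1/2⟩⊗|j,m⟩`, `|1/2,-1/2⟩⊗|j,m+1⟩` of `V_M` the Casimir has the symmetric matrix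
`[[s - t, b], [b, s + t]]` with `s = -(j+1/2)²`, `t = m + 1/2`, `b = i C`
(`Qc_single_one`, `Qc_single_zero`). Since `C² = -(j-m)(j+m+1)`, it follows that `b² = r² - t²` with
`r = j + 1/2`, so the eigenvalues are `s ± r`, i.e. `q_(∓1/2)`. The condition relating `j` and `ε`
gives `b ≠ 0` (`Cp_ne_zero`); hence the matrix is never scalar, and it is diagonalizable iff its
two eigenvalues differ, i.e. iff `r ≠ 0` (`diagOn_iff`).
-/

/-!
Couplings F_γ ⊗ C^ε_j for sl(2,ℝ).

Conventions: γ = G/2 with `G : ℕ`, `1 ≤ G`; ε is encoded by `E : ℂ` (with `E = 0 ∨ E = 1/2`);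
j ∈ ℂ. The space F_γ ⊗ C^ε_j has basis indexed by `(ν, z) : Fin (G+1) × ℤ`, the basis vector
`single (ν,z) 1` representing |γ, ν-γ⟩ ⊗ |j, ε+z⟩.
-/

noncomputable section

/-- Principal branch of the complex square root. -/
def csqrt (z : ℂ) : ℂ := z ^ ((1 : ℂ) / 2)

/-- C₊(j,m) = i √(j-m) √(j+m+1). -/
def Cp (j m : ℂ) : ℂ := Complex.I * csqrt (j - m) * csqrt (j + m + 1)

/-- C₋(j,m) = i √(j+m) √(j-m+1). -/
def Cm (j m : ℂ) : ℂ := Complex.I * csqrt (j + m) * csqrt (j - m + 1)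

/-- γ = G/2, as a complex number. -/
def gam (G : ℕ) : ℂ := (G : ℂ) / 2

/-- μ = ν - γ for ν : Fin (G+1). -/
def muc (G : ℕ) (ν : Fin (G + 1)) : ℂ := ((ν : ℕ) : ℂ) - gam G

/-- m = ε + z for z : ℤ. -/
def mcont (E : ℂ) (z : ℤ) : ℂ := E + (z : ℂ)

/-- The vector space F_γ ⊗ C^ε_j. -/
abbrev Wc (G : ℕ) := (Fin (G + 1) × ℤ) →₀ ℂ

/-- Basis vector with coefficient, out-of-range F_γ indices giving 0. -/
def eVc (G : ℕ) (i : ℤ) (z : ℤ) (c : ℂ) : Wc G :=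
  if h : 0 ≤ i ∧ i < (G : ℤ) + 1 then
    Finsupp.single ((⟨i.toNat, by omega⟩ : Fin (G + 1)), z) c
  else 0

/-- 𝒥₀ = J₀ ⊗ 1 + 1 ⊗ J₀. -/
def J0c (G : ℕ) (E : ℂ) : Wc G →ₗ[ℂ] Wc G :=
  Finsupp.lsum ℂ fun p => LinearMap.toSpanSingleton ℂ (Wc G)
    (Finsupp.single p (muc G p.1 + mcont E p.2))

/-- 𝒥₊ = J₊ ⊗ 1 + 1 ⊗ J₊. -/
def Jpc (G : ℕ) (j E : ℂ) : Wc G →ₗ[ℂ] Wc G :=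
  Finsupp.lsum ℂ fun p => LinearMap.toSpanSingleton ℂ (Wc G)
    (eVc G ((p.1 : ℕ) + 1) p.2 (Cp (gam G) (muc G p.1)) +
      Finsupp.single (p.1, p.2 + 1) (Cp j (mcont E p.2)))

/-- 𝒥₋ = J₋ ⊗ 1 + 1 ⊗ J₋. -/
def Jmc (G : ℕ) (j E : ℂ) : Wc G →ₗ[ℂ] Wc G :=
  Finsupp.lsum ℂ fun p => LinearMap.toSpanSingleton ℂ (Wc G)
    (eVc G ((p.1 : ℕ) - 1) p.2 (Cm (gam G) (muc G p.1)) +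
      Finsupp.single (p.1, p.2 - 1) (Cm j (mcont E p.2)))

/-- The Casimir 𝒬 = -𝒥₀(𝒥₀+1) + 𝒥₋𝒥₊. -/
def Qc (G : ℕ) (j E : ℂ) : Wc G →ₗ[ℂ] Wc G :=
  -(J0c G E ∘ₗ (J0c G E + LinearMap.id)) + Jmc G j E ∘ₗ Jpc G j E

/-- The 𝒥₀-eigenvalue-M subspace V_M of F_γ ⊗ C^ε_j for M = ε + γ + M₀, M₀ : ℤ:
spanned by the |γ,ν-γ⟩⊗|j,ε+z⟩ with (ν-γ) + (ε+z) = M, i.e. z = G + M₀ - ν. -/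
def VMc (G : ℕ) (M₀ : ℤ) : Submodule ℂ (Wc G) :=
  Submodule.span ℂ
    {w : Wc G | ∃ ν : Fin (G + 1), w = Finsupp.single (ν, (G : ℤ) + M₀ - (ν : ℕ)) 1}

/-- q_(μ) = -(j+μ)(j+μ+1) with μ = t - γ. -/
def qc (G : ℕ) (j : ℂ) (t : Fin (G + 1)) : ℂ :=
  -((j + muc G t) * (j + muc G t + 1))

/-- A linear operator is diagonalizable on an invariant subspace `p` iff `p` is spanned by
eigenvectors of the operator lying in `p`. -/
def DiagOn {V : Type*} [AddCommGroup V] [Module ℂ V]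
    (f : V →ₗ[ℂ] V) (p : Submodule ℂ V) : Prop :=
  Submodule.span ℂ {w : V | w ∈ p ∧ ∃ c : ℂ, f w = c • w} = p

lemma csqrt_mul_self (z : ℂ) : csqrt z * csqrt z = z := by
  rw [csqrt, ← pow_two, one_div]
  exact Complex.cpow_nat_inv_pow z two_ne_zero

lemma csqrt_one : csqrt 1 = 1 := by simp [csqrt]

lemma csqrt_ne_zero {z : ℂ} (hz : z ≠ 0) : csqrt z ≠ 0 := fun h =>
  hz (by rw [← csqrt_mul_self z, h, zero_mul])

lemma Cm_add_one (j m : ℂ) : Cm j (m + 1) = Cp j m := by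
  unfold Cm Cp
  rw [show j + (m + 1) = j + m + 1 by ring, show j - (m + 1) + 1 = j - m by ring]
  ring

lemma Cp_mul_self (j m : ℂ) : Cp j m * Cp j m = -((j - m) * (j + m + 1)) := by
  unfold Cp
  linear_combination (csqrt (j - m) * csqrt (j - m)) * (csqrt (j + m + 1) * csqrt (j + m + 1)) *
    Complex.I_mul_I - csqrt (j + m + 1) * csqrt (j + m + 1) * csqrt_mul_self (j - m)
    - (j - m) * csqrt_mul_self (j + m + 1)

/-- The hypothesis on `j` and `E` guarantees that the ladder coefficients of the continuous series
never vanish. -/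
lemma Cp_ne_zero (E j : ℂ) (hE : E = 0 ∨ E = 1 / 2)
    (hj : (∃ n : ℤ, 2 * j = (n : ℂ)) → ¬ ∃ n : ℤ, j - E = (n : ℂ)) (z : ℤ) :
    Cp j (mcont E z) ≠ 0 := by
  obtain ⟨k, hk⟩ : ∃ k : ℤ, 2 * E = k := by
    rcases hE with rfl | rfl
    · exact ⟨0, by simp⟩
    · exact ⟨1, by norm_num⟩
  unfold Cp mcont
  refine mul_ne_zero (mul_ne_zero Complex.I_ne_zero (csqrt_ne_zero fun h => ?_))
    (csqrt_ne_zero fun h => ?_)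
  · refine hj ⟨k + 2 * z, ?_⟩ ⟨z, ?_⟩
    · push_cast
      linear_combination 2 * h + hk
    · linear_combination h
  · refine hj ⟨-k - 2 * z - 2, ?_⟩ ⟨-k - z - 1, ?_⟩
    · push_cast
      linear_combination 2 * h - hk
    · push_cast
      linear_combination h - hk

lemma J0c_single (G : ℕ) (E : ℂ) (p : Fin (G + 1) × ℤ) (c : ℂ) :
    J0c G E (Finsupp.single p c) = Finsupp.single p (c * (muc G p.1 + mcont E p.2)) := by
  simp [J0c, mul_add]

lemma Jpc_single_zero (j E : ℂ) (z : ℤ) (c : ℂ) :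
    Jpc 1 j E (Finsupp.single (0, z) c) =
      Finsupp.single (1, z) (c * Complex.I) +
        Finsupp.single (0, z + 1) (c * Cp j (mcont E z)) := by
  have h : Cp (gam 1) (muc 1 0) = Complex.I := by
    norm_num [Cp, gam, muc, csqrt_one]
  simp [Jpc, eVc, h]

lemma Jpc_single_one (j E : ℂ) (z : ℤ) (c : ℂ) :
    Jpc 1 j E (Finsupp.single (1, z) c) =
      Finsupp.single (1, z + 1) (c * Cp j (mcont E z)) := by
  simp [Jpc, eVc]

lemma Jmc_single_zero (j E : ℂ) (z : ℤ) (c : ℂ) :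
    Jmc 1 j E (Finsupp.single (0, z + 1) c) =
      Finsupp.single (0, z) (c * Cp j (mcont E z)) := by
  have h : Cm j (mcont E (z + 1)) = Cp j (mcont E z) := by
    rw [← Cm_add_one]; simp [mcont, add_assoc]
  simp [Jmc, eVc, h]

lemma Jmc_single_one (j E : ℂ) (z : ℤ) (c : ℂ) :
    Jmc 1 j E (Finsupp.single (1, z + 1) c) =
      Finsupp.single (0, z + 1) (c * Complex.I) +
        Finsupp.single (1, z) (c * Cp j (mcont E z)) := by
  have h : Cm j (mcont E (z + 1)) = Cp j (mcont E z) := by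
    rw [← Cm_add_one]; simp [mcont, add_assoc]
  have h' : Cm (gam 1) (muc 1 1) = Complex.I := by
    norm_num [Cm, gam, muc, csqrt_one]
  simp [Jmc, eVc, h, h']

lemma Qc_single_one (j E : ℂ) (z : ℤ) :
    Qc 1 j E (Finsupp.single (1, z) 1) =
      (-(j + 1 / 2) ^ 2 - (mcont E z + 1 / 2)) • Finsupp.single (1, z) 1 +
        (Complex.I * Cp j (mcont E z)) • Finsupp.single (0, z + 1) 1 := by
  have hC := Cp_mul_self j (mcont E z)
  have hmu : muc 1 1 = 1 / 2 := by norm_num [muc, gam]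
  simp only [Qc, LinearMap.add_apply, LinearMap.neg_apply, LinearMap.comp_apply,
    LinearMap.id_apply, J0c_single, Jpc_single_one, Jmc_single_one, hmu,
    Finsupp.smul_single, smul_eq_mul, mul_one, one_mul, ← Finsupp.single_add,
    ← Finsupp.single_neg]
  rw [add_comm (Finsupp.single ((0 : Fin 2), z + 1) _), ← add_assoc, ← Finsupp.single_add]
  congr 2
  · linear_combination hC
  · ring

lemma Qc_single_zero (j E : ℂ) (z : ℤ) :
    Qc 1 j E (Finsupp.single (0, z + 1) 1) =
      (-(j + 1 / 2) ^ 2 + (mcont E z + 1 / 2)) • Finsupp.single (0, z + 1) 1 +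
        (Complex.I * Cp j (mcont E z)) • Finsupp.single (1, z) 1 := by
  have hC := Cp_mul_self j (mcont E (z + 1))
  have hm : mcont E (z + 1) = mcont E z + 1 := by simp [mcont, add_assoc]
  have hmu : muc 1 0 = -(1 / 2) := by norm_num [muc, gam]
  simp only [Qc, LinearMap.add_apply, LinearMap.neg_apply, LinearMap.comp_apply,
    LinearMap.id_apply, map_add, J0c_single, Jpc_single_zero, Jmc_single_zero, Jmc_single_one,
    hmu, Finsupp.smul_single, smul_eq_mul, mul_one, one_mul, ← Finsupp.single_add,
    ← Finsupp.single_neg]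
  rw [add_right_comm (Finsupp.single ((0 : Fin 2), z + 1) _), ← add_assoc,
    ← Finsupp.single_add, ← Finsupp.single_add]
  congr 2
  rw [hm] at hC ⊢
  linear_combination hC + Complex.I_mul_I

section TwoByTwo

variable {V : Type*} [AddCommGroup V] [Module ℂ V] {f : V →ₗ[ℂ] V} {u v : V} {s t b r : ℂ}

/-- If `f` has matrix `[[s - t, b], [b, s + t]]` in the basis `u, v` and `b² = r² - t²`, then
`b u + (r + t) v` is an eigenvector for `s + r`. Replacing `r` by `-r` gives the other one. -/
lemma apply_eigenvector (hu : f u = (s - t) • u + b • v) (hv : f v = (s + t) • v + b • u)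
    (hb : b * b = r ^ 2 - t ^ 2) :
    f (b • u + (r + t) • v) = (s + r) • (b • u + (r + t) • v) := by
  rw [map_add, map_smul, map_smul, hu, hv]
  have : b • b • v = (r ^ 2 - t ^ 2) • v := by rw [smul_smul, hb]
  rw [smul_add, this]
  module

/-- The eigenvalue equation in coordinates. -/
lemma eigen_coords (hli : ∀ x y : ℂ, x • u + y • v = 0 → x = 0 ∧ y = 0)
    (hu : f u = (s - t) • u + b • v) (hv : f v = (s + t) • v + b • u) {x y c : ℂ}
    (h : f (x • u + y • v) = c • (x • u + y • v)) :
    b * y = (c - s + t) * x ∧ b * x = (c - s - t) * y := by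
  have h0 : ((s - t) * x + b * y - c * x) • u + (b * x + (s + t) * y - c * y) • v = 0 := by
    rw [map_add, map_smul, map_smul, hu, hv] at h
    rw [← sub_eq_zero] at h
    rw [← h]
    module
  obtain ⟨h1, h2⟩ := hli _ _ h0
  exact ⟨by linear_combination h1, by linear_combination h2⟩

lemma eigenvalue_iff (hli : ∀ x y : ℂ, x • u + y • v = 0 → x = 0 ∧ y = 0)
    (hu : f u = (s - t) • u + b • v) (hv : f v = (s + t) • v + b • u)
    (hb : b * b = r ^ 2 - t ^ 2) (hb0 : b ≠ 0) (c : ℂ) :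
    (∃ w ∈ Submodule.span ℂ {u, v}, w ≠ 0 ∧ f w = c • w) ↔ c = s + r ∨ c = s - r := by
  constructor
  · rintro ⟨w, hw, hw0, hfw⟩
    obtain ⟨x, y, rfl⟩ := Submodule.mem_span_pair.1 hw
    obtain ⟨h1, h2⟩ := eigen_coords hli hu hv hfw
    have hx : x ≠ 0 := by
      rintro rfl
      have : y = 0 := by simpa [hb0] using h1
      simp [this] at hw0
    have h3 : x * ((c - (s + r)) * (c - (s - r))) = 0 := by
      linear_combination (-b) * h2 - (c - s - t) * h1 + x * hb
    rcases mul_eq_zero.1 ((mul_eq_zero.1 h3).resolve_left hx) with h | h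
    · exact .inl (sub_eq_zero.1 h)
    · exact .inr (sub_eq_zero.1 h)
  · have key : ∀ ρ : ℂ, b * b = ρ ^ 2 - t ^ 2 →
        ∃ w ∈ Submodule.span ℂ {u, v}, w ≠ 0 ∧ f w = (s + ρ) • w := fun ρ hρ =>
      ⟨_, Submodule.mem_span_pair.2 ⟨_, _, rfl⟩, fun h => hb0 (hli _ _ h).1,
        apply_eigenvector hu hv hρ⟩
    rintro (rfl | rfl)
    · exact key r hb
    · rw [sub_eq_add_neg]
      exact key (-r) (by rw [hb]; ring)

lemma diagOn_iff (hli : ∀ x y : ℂ, x • u + y • v = 0 → x = 0 ∧ y = 0)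
    (hu : f u = (s - t) • u + b • v) (hv : f v = (s + t) • v + b • u)
    (hb : b * b = r ^ 2 - t ^ 2) (hb0 : b ≠ 0) :
    DiagOn f (Submodule.span ℂ {u, v}) ↔ r ≠ 0 := by
  unfold DiagOn
  constructor
  · rintro h rfl
    -- All eigenvectors lie on the line through `b u + t v`, which misses `v`.
    have hle : Submodule.span ℂ {w : V | w ∈ Submodule.span ℂ {u, v} ∧ ∃ c : ℂ, f w = c • w} ≤
        Submodule.span ℂ {b • u + t • v} := by
      refine Submodule.span_le.2 ?_
      rintro w ⟨hw, c, hfw⟩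
      by_cases hw0 : w = 0
      · rw [hw0]; exact zero_mem _
      have hc : c = s := by
        simpa using (eigenvalue_iff hli hu hv hb hb0 c).1 ⟨w, hw, hw0, hfw⟩
      obtain ⟨x, y, rfl⟩ := Submodule.mem_span_pair.1 hw
      obtain ⟨h1, -⟩ := eigen_coords hli hu hv hfw
      refine Submodule.mem_span_singleton.2 ⟨x / b, ?_⟩
      have hy : y = x / b * t := by
        field_simp
        rw [hc] at h1
        linear_combination h1
      rw [hy, smul_add, smul_smul, smul_smul, div_mul_cancel₀ _ hb0]
    rw [h] at hle
    obtain ⟨k, hk⟩ := Submodule.mem_span_singleton.1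
      (hle (Submodule.subset_span (by simp : v ∈ ({u, v} : Set V))))
    obtain ⟨h1, h2⟩ := hli (k * b) (k * t - 1) (by
      rw [← sub_eq_zero] at hk
      rw [← hk]
      module)
    have : k = 0 := by simpa [hb0] using h1
    simp [this] at h2
  · intro hr
    refine le_antisymm (Submodule.span_le.2 fun w hw => hw.1) ?_
    set S := Submodule.span ℂ {w : V | w ∈ Submodule.span ℂ {u, v} ∧ ∃ c : ℂ, f w = c • w}
    have key : ∀ ρ : ℂ, b * b = ρ ^ 2 - t ^ 2 → b • u + (ρ + t) • v ∈ S := fun ρ hρ =>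
      Submodule.subset_span ⟨Submodule.mem_span_pair.2 ⟨_, _, rfl⟩, _,
        apply_eigenvector hu hv hρ⟩
    have h1 := key r hb
    have h2 := key (-r) (by rw [hb]; ring)
    have hvS : v ∈ S := by
      have h3 : (2 * r) • v ∈ S := by
        convert S.sub_mem h1 h2 using 1
        module
      exact (S.smul_mem_iff (by simpa using hr)).1 h3
    have huS : u ∈ S := by
      refine (S.smul_mem_iff hb0).1 ?_
      convert S.sub_mem h1 (S.smul_mem (r + t) hvS) using 1
      module
    refine Submodule.span_le.2 ?_
    rintro w (rfl | rfl)
    exacts [huS, hvS]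

end TwoByTwo

lemma VMc_one (M₀ : ℤ) :
    VMc 1 M₀ = Submodule.span ℂ
      {(Finsupp.single (1, M₀) 1 : Wc 1), Finsupp.single (0, M₀ + 1) 1} := by
  unfold VMc
  congr 1
  ext w
  simp [Fin.exists_fin_two, or_comm, add_comm]

/-- For the coupling F_{1/2} ⊗ C^ε_j (γ = 1/2, i.e. G = 1), and any M
(M = ε + 1/2 + M₀' with M₀' ∈ ℤ; here M = ε + γ + M₀), the 2×2 restriction of 𝒬 to V_M is
diagonalizable iff j ≠ -1/2, in which case its eigenvalues are exactly the two distinct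
values q_(-1/2) = -(j-1/2)(j+1/2) and q_(1/2) = -(j+1/2)(j+3/2). -/
theorem Qc_half_diagonalizable_iff (E j : ℂ) (hE : E = 0 ∨ E = 1 / 2)
    (hj : (∃ n : ℤ, 2 * j = (n : ℂ)) → ¬ ∃ n : ℤ, j - E = (n : ℂ)) (M₀ : ℤ) :
    (DiagOn (Qc 1 j E) (VMc 1 M₀) ↔ j ≠ -(1 / 2)) ∧
    (j ≠ -(1 / 2) →
      (∀ c : ℂ,
        (∃ w ∈ VMc 1 M₀, w ≠ 0 ∧ Qc 1 j E w = c • w) ↔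
          (c = -((j - 1 / 2) * (j + 1 / 2)) ∨ c = -((j + 1 / 2) * (j + 3 / 2)))) ∧
      -((j - 1 / 2) * (j + 1 / 2)) ≠ -((j + 1 / 2) * (j + 3 / 2))) := by
  set m := mcont E M₀
  have hli : ∀ x y : ℂ, x • (Finsupp.single (1, M₀) 1 : Wc 1) +
      y • (Finsupp.single (0, M₀ + 1) 1 : Wc 1) = 0 → x = 0 ∧ y = 0 := fun x y h =>
    ⟨by simpa using DFunLike.congr_fun h (1, M₀), by simpa using DFunLike.congr_fun h (0, M₀ + 1)⟩
  have hb : (Complex.I * Cp j m) * (Complex.I * Cp j m) =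
      (j + 1 / 2) ^ 2 - (m + 1 / 2) ^ 2 := by
    linear_combination Cp j m * Cp j m * Complex.I_mul_I - Cp_mul_self j m
  have hb0 : Complex.I * Cp j m ≠ 0 :=
    mul_ne_zero Complex.I_ne_zero (Cp_ne_zero E j hE hj M₀)
  have hr : j + 1 / 2 ≠ 0 ↔ j ≠ -(1 / 2) := by rw [Ne, add_eq_zero_iff_eq_neg]
  rw [VMc_one]
  refine ⟨(diagOn_iff hli (Qc_single_one j E M₀) (Qc_single_zero j E M₀) hb hb0).trans hr,
    fun h => ⟨fun c => ?_, fun h' => hr.2 h ?_⟩⟩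
  · rw [eigenvalue_iff hli (Qc_single_one j E M₀) (Qc_single_zero j E M₀) hb hb0 c]
    rw [show -(j + 1 / 2) ^ 2 + (j + 1 / 2) = -((j - 1 / 2) * (j + 1 / 2)) by ring,
      show -(j + 1 / 2) ^ 2 - (j + 1 / 2) = -((j + 1 / 2) * (j + 3 / 2)) by ring]
  · linear_combination h' / 2

end
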